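/- Let δ be the least ordinal with X_δ = X_{δ+1}. Then δ ≥ ω₁, the first uncountable ordinal. -/

import Mathlib

open Set Topology

noncomputable section

/-- A set is an `Fσ` set if it is a countable union of closed sets. -/
def IsFSigma {X : Type*} [TopologicalSpace X] (s : Set X) : Prop :=
  ∃ F : ℕ → Set X, (∀ n, IsClosed (F n)) ∧ s = ⋃ n, F n

/-- A topological space is an `F`-space if any two disjoint open `Fσ` subsets
have disjoint closures. -/
def IsFSpace (X : Type*) [TopologicalSpace X] : Prop :=
  ∀ s t : Set X, IsOpen s → IsOpen t → IsFSigma s → IsFSigma t → Disjoint s t →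
    Disjoint (closure s) (closure t)

/-- `𝐒 = ℕ × [0,1]²` where `ℕ` is discrete and `[0,1]` is the unit interval. -/
abbrev bS : Type := ℕ × (unitInterval × unitInterval)

/-- `βπ : β𝐒 → βℕ`, the Stone–Čech extension of the projection `π(n,x,y) = n`. -/
def betaPi : StoneCech bS → StoneCech ℕ :=
  stoneCechExtend (continuous_stoneCechUnit.comp continuous_fst)

/-- `βf : β𝐒 → [0,1]`, the Stone–Čech extension of `f(n,x,y) = x`. -/
def betaF : StoneCech bS → unitInterval :=
  stoneCechExtend (continuous_fst.comp continuous_snd)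

/-- `S_u = βπ⁻¹(u)`, as a subset of `β𝐒` (carrying the subspace topology). -/
def Su (u : StoneCech ℕ) : Set (StoneCech bS) := betaPi ⁻¹' {u}

/-- `f_u : S_u → [0,1]`, the restriction of `βf` to `S_u`. -/
def fu (u : StoneCech ℕ) : (Su u) → unitInterval := fun z => betaF z.1

/-- `L_t = f_u⁻¹(t) ∩ cl_{S_u} f_u⁻¹([0,t))`. -/
def Lset (u : StoneCech ℕ) (t : unitInterval) : Set (Su u) :=
  fu u ⁻¹' {t} ∩ closure (fu u ⁻¹' (Set.Ico 0 t))

/-- `R_t = f_u⁻¹(t) ∩ cl_{S_u} f_u⁻¹((t,1])`. -/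
def Rset (u : StoneCech ℕ) (t : unitInterval) : Set (Su u) :=
  fu u ⁻¹' {t} ∩ closure (fu u ⁻¹' (Set.Ioc t 1))

/-- The rectangle `P_{s,r} = S_u ∩ cl_{β𝐒}(ℕ × [s,r] × I)`, viewed as a subset of `S_u`. -/
def Pset (u : StoneCech ℕ) (s r : unitInterval) : Set (Su u) :=
  Subtype.val ⁻¹' closure (stoneCechUnit '' {p : bS | p.2.1 ∈ Set.Icc s r})

/-- `L_{s,t} = cl_{S_u}(⋃_{s<r<t} P_{s,r})`. -/
def Lst (u : StoneCech ℕ) (s t : unitInterval) : Set (Su u) :=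
  closure (⋃ r ∈ Set.Ioo s t, Pset u s r)

/-- The interior of `B` in the subspace `A`, viewed as a subset of the ambient space. -/
def relInt {Y : Type*} [TopologicalSpace Y] (A B : Set Y) : Set Y :=
  Subtype.val '' interior ((Subtype.val : A → Y) ⁻¹' B)

/-- The transfinite sequence `X_α ⊆ S_u`: `X_0 = S_u`,
`X_{α+1} = X_α \ ⋃_{t} Int_{X_α}(X_α ∩ f_u⁻¹(t))`, and `X_λ = ⋂_{β<λ} X_β` at limits. -/
def Xseq (u : StoneCech ℕ) : Ordinal → Set (Su u) := fun α =>
  Ordinal.limitRecOn α Set.univ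
    (fun _ Xa => Xa \ ⋃ t : unitInterval, relInt Xa (Xa ∩ fu u ⁻¹' {t}))
    (fun o _ ih => ⋂ (β : {β : Ordinal // β < o}), ih β.1 β.2)

/-- The bottom line `B_u = S_u ∩ cl_{β𝐒}(ℕ × I × {0})`, viewed as a subset of `S_u`. -/
def Bu (u : StoneCech ℕ) : Set (Su u) :=
  Subtype.val ⁻¹' closure (stoneCechUnit '' {p : bS | p.2.2 = 0})

/-- The top line `T_u = S_u ∩ cl_{β𝐒}(ℕ × I × {1})`, viewed as a subset of `S_u`. -/
def Tu (u : StoneCech ℕ) : Set (Su u) :=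
  Subtype.val ⁻¹' closure (stoneCechUnit '' {p : bS | p.2.2 = 1})

/-!
Removing the relative interiors of the fibres makes sense for any map `f : X → Y`. Let `f` be
continuous on a compact Hausdorff `F`-space `X`, with values in a first countable Hausdorff space
`Y` without isolated points, and let every fibre have nonempty interior. By induction on
`α < ω₁`, every fibre contains a point of `X_α ∖ X_{α+1}`. Indeed, choose ordinals `β_k` cofinal in
`α`, values `y_k ≠ y` converging to `y`, and points `z_k` of `X_{β_k} ∖ X_{β_k + 1}` over `y_k`.
A cluster point `p` of `z` lies over `y`, and in `X_α` because it is a limit of points of the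
earlier `X_β` in other fibres. The countable set `{z_k}` and the `Fσ` set `X_α ∖ f⁻¹(y)` are
separated, so in an `F`-space their closures are disjoint: near `p`, the set `X_α` lies in the
fibre of `y`, so `p ∉ X_{α+1}`.

The fibres of `f_u` have nonempty interior because `u` is free: the function
`min(1, n · |x - t|)` on `𝐒` extends to `β𝐒`, and on `S_u` its extension is `< 1` only over `t`.
-/

open Filter

section FSpace

variable {X : Type*} [TopologicalSpace X]

theorem isFSigma_iff_isGδ_compl {s : Set X} : IsFSigma s ↔ IsGδ sᶜ := by
  rw [isGδ_iff_eq_iInter_nat]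
  constructor
  · rintro ⟨F, hF, rfl⟩
    exact ⟨fun n => (F n)ᶜ, fun n => (hF n).isOpen_compl, compl_iUnion F⟩
  · rintro ⟨U, hU, hs⟩
    exact ⟨fun n => (U n)ᶜ, fun n => (hU n).isClosed_compl,
      by rw [← compl_iInter, ← hs, compl_compl]⟩

theorem isFSigma_setOf_lt {a b : X → ℝ} (ha : Continuous a) (hb : Continuous b) :
    IsFSigma {x | a x < b x} := by
  have h_compl : {x | a x < b x}ᶜ = (fun x => b x - a x) ⁻¹' Iic 0 := by
    ext x
    simp
  rw [isFSigma_iff_isGδ_compl, h_compl]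
  exact isClosed_Iic.isGδ.preimage (hb.sub ha)

theorem isFSigma_sdiff_fiber {Y : Type*} [TopologicalSpace Y] [T1Space Y]
    [FirstCountableTopology Y] {f : X → Y} (hf : Continuous f) {K : Set X} (hK : IsClosed K)
    (y : Y) : IsFSigma (K \ f ⁻¹' {y}) := by
  rw [isFSigma_iff_isGδ_compl, sdiff_eq, compl_inter, compl_compl]
  exact hK.isOpen_compl.isGδ.union ((IsGδ.singleton y).preimage hf)

theorem IsFSigma.exists_continuous_eq_zero_pos [NormalSpace X] {A C : Set X} (hA : IsFSigma A)
    (hC : IsClosed C) (hCA : Disjoint C A) :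
    ∃ a : X → ℝ, Continuous a ∧ (∀ x ∈ C, a x = 0) ∧ ∀ x ∈ A, 0 < a x := by
  obtain ⟨F, hF, rfl⟩ := hA
  choose g g_zero g_one g_mem using fun n =>
    exists_continuous_zero_one_of_isClosed hC (hF n) (disjoint_iUnion_right.1 hCA n)
  have term_nonneg (n : ℕ) (x : X) : 0 ≤ (1 / 2 : ℝ) ^ n * g n x :=
    mul_nonneg (by positivity) (g_mem n x).1
  have norm_term_le (n : ℕ) (x : X) : ‖(1 / 2 : ℝ) ^ n * g n x‖ ≤ (1 / 2) ^ n := by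
    rw [Real.norm_of_nonneg (term_nonneg n x)]
    exact mul_le_of_le_one_right (by positivity) (g_mem n x).2
  refine ⟨fun x => ∑' n, (1 / 2 : ℝ) ^ n * g n x,
    continuous_tsum (fun n => by fun_prop) summable_geometric_two norm_term_le, ?_, ?_⟩
  · intro x hx
    simp [fun n => g_zero n hx]
  · intro x hx
    obtain ⟨n, hn⟩ := mem_iUnion.1 hx
    have summable_terms : Summable fun n => (1 / 2 : ℝ) ^ n * g n x :=
      .of_norm_bounded summable_geometric_two fun n => norm_term_le n x
    exact summable_terms.tsum_pos (fun m => term_nonneg m x) n (by simp [g_one n hn])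

theorem IsFSpace.disjoint_closure_of_separated [NormalSpace X] (hX : IsFSpace X) {A B : Set X}
    (hA : IsFSigma A) (hB : IsFSigma B) (hAB : Disjoint (closure A) B)
    (hBA : Disjoint (closure B) A) : Disjoint (closure A) (closure B) := by
  obtain ⟨a, ha, a_zero, a_pos⟩ := hA.exists_continuous_eq_zero_pos isClosed_closure hBA
  obtain ⟨b, hb, b_zero, b_pos⟩ := hB.exists_continuous_eq_zero_pos isClosed_closure hAB
  have disjoint_closures : Disjoint (closure {x | b x < a x}) (closure {x | a x < b x}) :=
    hX _ _ (isOpen_lt hb ha) (isOpen_lt ha hb) (isFSigma_setOf_lt hb ha) (isFSigma_setOf_lt ha hb)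
      (disjoint_left.2 fun x (hba : b x < a x) hab => lt_asymm hba hab)
  refine disjoint_closures.mono (closure_mono fun x hx => ?_) (closure_mono fun x hx => ?_)
  · simpa only [mem_ofPred_eq, b_zero x (subset_closure hx)] using a_pos x hx
  · simpa only [mem_ofPred_eq, a_zero x (subset_closure hx)] using b_pos x hx

end FSpace

section ClusterPoints

variable {X Y : Type*} [TopologicalSpace X] [TopologicalSpace Y]

theorem mapClusterPt_atTop_of_mem_closure_range [T1Space X] {z : ℕ → X} {w : X}
    (hw : w ∈ closure (range z)) (hwz : w ∉ range z) : MapClusterPt w atTop z := by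
  refine mapClusterPt_iff_frequently.2 fun s hs => frequently_atTop.2 fun N => ?_
  have initial_compl : (z '' Iio N)ᶜ ∈ 𝓝 w :=
    ((finite_Iio N).image z).isClosed.compl_mem_nhds fun h => hwz (image_subset_range _ _ h)
  obtain ⟨_, ⟨hks, hkN⟩, k, rfl⟩ := mem_closure_iff_nhds.1 hw _ (inter_mem hs initial_compl)
  exact ⟨k, not_lt.1 fun hk => hkN ⟨k, hk, rfl⟩, hks⟩

theorem apply_eq_of_mapClusterPt [T2Space Y] {ι : Type*} {l : Filter ι} {f : X → Y} {z : ι → X}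
    {p : X} {y : Y} (hf : ContinuousAt f p) (hp : MapClusterPt p l z)
    (hz : Tendsto (f ∘ z) l (𝓝 y)) : f p = y :=
  eq_of_nhds_neBot ((hp.continuousAt_comp hf).clusterPt.mono hz)

theorem IsFSpace.notMem_closure_sdiff_fiber [T1Space X] [NormalSpace X] (hX : IsFSpace X)
    [T2Space Y] [FirstCountableTopology Y] {f : X → Y} (hf : Continuous f) {K : Set X}
    (hK : IsClosed K) {z : ℕ → X} (hz : ∀ k, z k ∉ K) {y : Y} (hy : Tendsto (f ∘ z) atTop (𝓝 y))
    {p : X} (hp : p ∈ closure (range z)) : p ∉ closure (K \ f ⁻¹' {y}) := by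
  have range_notMem : ∀ x ∈ K, x ∉ range z := by
    rintro _ hx ⟨k, rfl⟩
    exact hz k hx
  have limit_notMem : Disjoint (closure (range z)) (K \ f ⁻¹' {y}) :=
    disjoint_left.2 fun w hw hwK => hwK.2 <| apply_eq_of_mapClusterPt hf.continuousAt
      (mapClusterPt_atTop_of_mem_closure_range hw (range_notMem w hwK.1)) hy
  have closure_subset : closure (K \ f ⁻¹' {y}) ⊆ K := closure_minimal sdiff_subset hK
  exact disjoint_left.1 (hX.disjoint_closure_of_separated
    (isFSigma_iff_isGδ_compl.2 (countable_range z).isGδ_compl) (isFSigma_sdiff_fiber hf hK y)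
    limit_notMem (disjoint_left.2 fun w hw => range_notMem w (closure_subset hw))) hp

end ClusterPoints

section FiberDerivative

variable {X Y : Type*} [TopologicalSpace X]

theorem relInt_eq_sdiff_closure_sdiff (A B : Set X) : relInt A B = A \ closure (A \ B) := by
  ext x
  simp [relInt, interior_eq_compl_closure_compl,
    IsInducing.subtypeVal.closure_eq_preimage_closure_image, ← preimage_compl,
    Subtype.image_preimage_coe, sdiff_eq]

/-- The derivative of a set `A` along `f`: the points of `A` at which no fibre of `f` is a relative
neighbourhood in `A`. It is the operation `X_α ↦ X_{α+1}` for an arbitrary map `f`. -/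
def fiberDeriv (f : X → Y) (A : Set X) : Set X :=
  A \ ⋃ y : Y, relInt A (A ∩ f ⁻¹' {y})

theorem fiberDeriv_eq_inter_iInter_closure (f : X → Y) (A : Set X) :
    fiberDeriv f A = A ∩ ⋂ y, closure (A \ f ⁻¹' {y}) := by
  ext x
  simp only [fiberDeriv, relInt_eq_sdiff_closure_sdiff, sdiff_self_inter, Set.mem_sdiff,
    mem_iUnion, mem_inter_iff, mem_iInter]
  grind

theorem mem_fiberDeriv_iff {f : X → Y} {A : Set X} {x : X} :
    x ∈ fiberDeriv f A ↔ x ∈ A ∧ x ∈ closure (A \ f ⁻¹' {f x}) := by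
  rw [fiberDeriv_eq_inter_iInter_closure, mem_inter_iff, mem_iInter]
  refine and_congr_right fun hxA => ⟨fun h => h (f x), fun h y => ?_⟩
  by_cases hxy : f x = y
  · exact hxy ▸ h
  · exact subset_closure ⟨hxA, hxy⟩

theorem isClosed_fiberDeriv (f : X → Y) {A : Set X} (hA : IsClosed A) :
    IsClosed (fiberDeriv f A) := by
  rw [fiberDeriv_eq_inter_iInter_closure]
  exact hA.inter (isClosed_iInter fun _ => isClosed_closure)

/-- The transfinite iteration of `fiberDeriv f` starting from the whole space, with intersections at
limits. It is the sequence `X_α` for an arbitrary map `f`. -/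
def fiberDerivSeq (f : X → Y) (α : Ordinal) : Set X :=
  Ordinal.limitRecOn α univ (fun _ A => fiberDeriv f A)
    (fun o _ ih => ⋂ β : {β : Ordinal // β < o}, ih β.1 β.2)

@[simp]
theorem fiberDerivSeq_zero (f : X → Y) : fiberDerivSeq f 0 = univ := by
  simp [fiberDerivSeq]

theorem fiberDerivSeq_add_one (f : X → Y) (α : Ordinal) :
    fiberDerivSeq f (α + 1) = fiberDeriv f (fiberDerivSeq f α) := by
  simp [fiberDerivSeq]

theorem fiberDerivSeq_limit (f : X → Y) {α : Ordinal} (hα : Order.IsSuccLimit α) :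
    fiberDerivSeq f α = ⋂ β : {β : Ordinal // β < α}, fiberDerivSeq f β := by
  simp only [fiberDerivSeq]
  rw [Ordinal.limitRecOn_limit _ _ _ _ hα]

theorem antitone_fiberDerivSeq (f : X → Y) : Antitone (fiberDerivSeq f) := by
  intro β α h
  induction α using Ordinal.limitRecOn with
  | zero => rw [nonpos_iff_eq_zero.1 h]
  | add_one o ih =>
    rcases h.eq_or_lt with rfl | h
    · rfl
    · rw [fiberDerivSeq_add_one]
      exact sdiff_subset.trans (ih (Order.lt_add_one_iff.1 h))
  | limit o ho ih =>
    rcases h.eq_or_lt with rfl | h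
    · rfl
    · rw [fiberDerivSeq_limit f ho]
      exact iInter_subset _ (⟨β, h⟩ : {β : Ordinal // β < o})

theorem isClosed_fiberDerivSeq (f : X → Y) (α : Ordinal) : IsClosed (fiberDerivSeq f α) := by
  induction α using Ordinal.limitRecOn with
  | zero => simp
  | add_one o ih =>
    rw [fiberDerivSeq_add_one]
    exact isClosed_fiberDeriv f ih
  | limit o ho ih =>
    rw [fiberDerivSeq_limit f ho]
    exact isClosed_iInter fun β => ih β.1 β.2

theorem mem_fiberDerivSeq_of_forall_lt {f : X → Y} {α : Ordinal} {x : X}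
    (h : ∀ β < α, x ∈ closure (fiberDerivSeq f β \ f ⁻¹' {f x})) : x ∈ fiberDerivSeq f α := by
  have mem_earlier : ∀ β < α, x ∈ fiberDerivSeq f β := fun β hβ =>
    closure_minimal sdiff_subset (isClosed_fiberDerivSeq f β) (h β hβ)
  rcases Ordinal.zero_or_succ_or_isSuccLimit α with rfl | ⟨o, rfl⟩ | hα
  · simp
  · have ho : o < o + 1 := Order.lt_add_one_iff.2 le_rfl
    exact fiberDerivSeq_add_one f o ▸ mem_fiberDeriv_iff.2 ⟨mem_earlier o ho, h o ho⟩
  · rw [fiberDerivSeq_limit f hα]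
    exact mem_iInter.2 fun β => mem_earlier β.1 β.2

theorem mem_fiberDerivSeq_of_mapClusterPt {f : X → Y} {α : Ordinal} {b : ℕ → Ordinal}
    (hb : ∀ β < α, ∀ᶠ k in atTop, β ≤ b k) {z : ℕ → X} (hz : ∀ k, z k ∈ fiberDerivSeq f (b k))
    {p : X} (hp : MapClusterPt p atTop z) (hfz : ∀ k, f (z k) ≠ f p) : p ∈ fiberDerivSeq f α := by
  refine mem_fiberDerivSeq_of_forall_lt fun β hβ => mem_closure_iff_nhds.2 fun s hs => ?_
  obtain ⟨k, hks, hk⟩ := ((hp.frequently hs).and_eventually (hb β hβ)).exists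
  exact ⟨z k, hks, antitone_fiberDerivSeq f hk (hz k), hfz k⟩

end FiberDerivative

section CountableStages

variable {X Y : Type*} [TopologicalSpace X] [TopologicalSpace Y] [T2Space Y]
  [FirstCountableTopology Y] {f : X → Y}

theorem countable_Iio_of_lt_ord_aleph_one {α : Ordinal} (hα : α < (Cardinal.aleph 1).ord) :
    (Iio α).Countable := by
  rw [← Cardinal.le_aleph0_iff_set_countable, Cardinal.mk_Iio_ordinal, Cardinal.lift_le_aleph0,
    ← Cardinal.lt_aleph_one_iff]
  exact Cardinal.lt_ord.1 hα

theorem exists_seq_cofinal_of_lt_ord_aleph_one {α : Ordinal} (hα : α < (Cardinal.aleph 1).ord)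
    (hα₀ : α ≠ 0) :
    ∃ b : ℕ → Ordinal, (∀ k, b k < α) ∧ ∀ β < α, ∀ᶠ k in atTop, β ≤ b k := by
  have : Countable (Iio α) := countable_Iio_of_lt_ord_aleph_one hα
  have : Nonempty (Iio α) := ⟨⟨0, pos_iff_ne_zero.2 hα₀⟩⟩
  obtain ⟨b, hb⟩ := exists_seq_tendsto (atTop : Filter (Iio α))
  exact ⟨fun k => b k, fun k => (b k).2, fun β hβ => hb.eventually_ge_atTop ⟨β, hβ⟩⟩

theorem notMem_fiberDerivSeq_add_one_of_mapClusterPt [T1Space X] [NormalSpace X] (hX : IsFSpace X)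
    (hf : Continuous f) {α : Ordinal} {z : ℕ → X} (hz : ∀ k, z k ∉ fiberDerivSeq f α) {p : X}
    (hp : MapClusterPt p atTop z) (hfz : Tendsto (f ∘ z) atTop (𝓝 (f p))) :
    p ∉ fiberDerivSeq f (α + 1) := by
  have hp_closure : p ∈ closure (range z) :=
    mem_closure_iff_clusterPt.2 (hp.clusterPt.mono (le_principal_iff.2 range_mem_map))
  rw [fiberDerivSeq_add_one, mem_fiberDeriv_iff]
  exact fun h => hX.notMem_closure_sdiff_fiber hf (isClosed_fiberDerivSeq f α) hz hfz hp_closure h.2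

theorem exists_mem_fiberDerivSeq_sdiff_add_one [CompactSpace X] [T2Space X] (hX : IsFSpace X)
    [PerfectSpace Y] (hf : Continuous f) (hint : ∀ y, (interior (f ⁻¹' {y})).Nonempty)
    {α : Ordinal} (hα : α < (Cardinal.aleph 1).ord) (y : Y) :
    ∃ x, f x = y ∧ x ∈ fiberDerivSeq f α \ fiberDerivSeq f (α + 1) := by
  induction α using WellFoundedLT.induction generalizing y with
  | ind α ih =>
  rcases eq_or_ne α 0 with rfl | hα₀
  · obtain ⟨x, hx⟩ := hint y
    obtain rfl : f x = y := interior_subset (s := f ⁻¹' {y}) hx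
    refine ⟨x, rfl, by simp, ?_⟩
    rw [fiberDerivSeq_add_one, mem_fiberDeriv_iff, fiberDerivSeq_zero, ← compl_eq_univ_sdiff,
      closure_compl]
    exact fun h => h.2 hx
  obtain ⟨b, hbα, hb⟩ := exists_seq_cofinal_of_lt_ord_aleph_one hα hα₀
  obtain ⟨s, hs, hsy⟩ := mem_closure_iff_seq_limit.1 (dense_compl_singleton y y)
  choose z hzs hz hz' using fun k => ih (b k) (hbα k) ((hbα k).trans hα) (s k)
  obtain ⟨p, hp : MapClusterPt p atTop z⟩ := exists_clusterPt_of_compactSpace (map z atTop)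
  have hfz : Tendsto (f ∘ z) atTop (𝓝 y) := hsy.congr fun k => (hzs k).symm
  obtain rfl : f p = y := apply_eq_of_mapClusterPt hf.continuousAt hp hfz
  refine ⟨p, rfl, mem_fiberDerivSeq_of_mapClusterPt hb hz hp fun k => hzs k ▸ hs k,
    notMem_fiberDerivSeq_add_one_of_mapClusterPt hX hf (fun k hk => hz' k ?_) hp hfz⟩
  exact antitone_fiberDerivSeq f (Order.add_one_le_of_lt (hbα k)) hk

theorem omega1_le_delta_general [CompactSpace X] [T2Space X] (hX : IsFSpace X) [PerfectSpace Y]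
    [Nonempty Y] (hf : Continuous f) (hint : ∀ y, (interior (f ⁻¹' {y})).Nonempty) {δ : Ordinal}
    (hδ : fiberDerivSeq f δ = fiberDerivSeq f (δ + 1)) : (Cardinal.aleph 1).ord ≤ δ := by
  by_contra hlt
  obtain ⟨x, -, hx, hx'⟩ :=
    exists_mem_fiberDerivSeq_sdiff_add_one hX hf hint (not_le.1 hlt) (Classical.arbitrary Y)
  exact hx' (hδ ▸ hx)

end CountableStages

section StoneCechFibers

theorem stoneCechExtend_stoneCechExtend_eq {A B K : Type*} [TopologicalSpace A]
    [TopologicalSpace B] [TopologicalSpace K] [CompactSpace K] [T2Space K] {g : B → K}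
    (hg : Continuous g) {σ : A → B} (hσ : Continuous σ) {h : StoneCech A → K} (hh : Continuous h)
    (hgσ : ∀ a, g (σ a) = h (stoneCechUnit a)) (v : StoneCech A) :
    stoneCechExtend hg (stoneCechExtend (continuous_stoneCechUnit.comp hσ) v) = h v := by
  refine congrFun (stoneCech_hom_ext ((continuous_stoneCechExtend hg).comp
    (continuous_stoneCechExtend _)) hh (funext fun a => ?_)) v
  simpa only [Function.comp_apply, stoneCechExtend_stoneCechUnit] using hgσ a

theorem exists_stoneCechUnit_mem_of_finite {E D : Type*} [TopologicalSpace E]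
    [TopologicalSpace D] {π : E → D} (hπ : Continuous π) {u : StoneCech D}
    (hu : ∀ d, u ≠ stoneCechUnit d) {q : StoneCech E}
    (hq : stoneCechExtend (continuous_stoneCechUnit.comp hπ) q = u) {O : Set (StoneCech E)}
    (hO : IsOpen O) (hqO : q ∈ O) {F : Set D} (hF : F.Finite) :
    ∃ p, π p ∉ F ∧ stoneCechUnit p ∈ O := by
  have hF_open : IsOpen (stoneCechExtend (continuous_stoneCechUnit.comp hπ) ⁻¹'
      (stoneCechUnit '' F)ᶜ) :=
    (hF.image _).isClosed.isOpen_compl.preimage (continuous_stoneCechExtend _)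
  have hqF : u ∉ stoneCechUnit '' F := fun ⟨d, _, hd⟩ => hu d hd.symm
  obtain ⟨p, hpO, hpF⟩ := denseRange_stoneCechUnit.exists_mem_open (hO.inter hF_open)
    ⟨q, hqO, by rwa [mem_preimage, hq]⟩
  rw [mem_preimage, stoneCechExtend_stoneCechUnit] at hpF
  exact ⟨p, fun hp => hpF (mem_image_of_mem _ hp), hpO⟩

variable {E Y : Type*} [MetricSpace Y]

/-- The function `min(1, π · dist(f, y))`. As `π → ∞`, its sublevel sets `< 1` shrink to the fibre
of `f` over `y`. -/
def pinch (π : E → ℕ) (f : E → Y) (y : Y) (p : E) : unitInterval :=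
  projIcc 0 1 zero_le_one (π p * dist (f p) y)

theorem mul_dist_lt_one_of_pinch_lt_one {π : E → ℕ} {f : E → Y} {y : Y} {p : E}
    (h : pinch π f y p < 1) : π p * dist (f p) y < 1 := by
  by_contra! hle
  exact h.ne (projIcc_of_right_le _ hle)

variable [TopologicalSpace E] {π : E → ℕ} {f : E → Y} {u : StoneCech ℕ} {y : Y}

theorem continuous_pinch (hπ : Continuous π) (hf : Continuous f) (y : Y) :
    Continuous (pinch π f y) := by
  have hπ_real : Continuous fun p => (π p : ℝ) := continuous_of_discreteTopology.comp hπ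
  exact continuous_projIcc.comp (hπ_real.mul (hf.dist continuous_const))

theorem exists_stoneCechExtend_pinch_eq_zero (hπ : Continuous π) (hf : Continuous f)
    {σ : ℕ → E} (hσπ : ∀ n, π (σ n) = n) (hσf : ∀ n, f (σ n) = y) (u : StoneCech ℕ) :
    ∃ q, stoneCechExtend (continuous_stoneCechUnit.comp hπ) q = u ∧
      stoneCechExtend (continuous_pinch hπ hf y) q = 0 := by
  have hσ : Continuous σ := continuous_of_discreteTopology
  refine ⟨stoneCechExtend (continuous_stoneCechUnit.comp hσ) u, ?_, ?_⟩
  · exact stoneCechExtend_stoneCechExtend_eq _ hσ continuous_id (by simp [hσπ]) u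
  · exact stoneCechExtend_stoneCechExtend_eq _ hσ continuous_const (by simp [pinch, hσf]) u

variable [CompactSpace Y]

theorem stoneCechExtend_eq_of_pinch_lt_one (hπ : Continuous π) (hf : Continuous f)
    (hu : ∀ n, u ≠ stoneCechUnit n) {q : StoneCech E}
    (hq : stoneCechExtend (continuous_stoneCechUnit.comp hπ) q = u)
    (hq_lt : stoneCechExtend (continuous_pinch hπ hf y) q < 1) : stoneCechExtend hf q = y := by
  by_contra hne
  obtain ⟨N, hN⟩ := exists_nat_one_div_lt (dist_pos.2 hne)
  have hO : IsOpen ({q | stoneCechExtend (continuous_pinch hπ hf y) q < 1} ∩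
      {q | 1 / ((N : ℝ) + 1) < dist (stoneCechExtend hf q) y}) :=
    (isOpen_lt (continuous_stoneCechExtend _) continuous_const).inter
      (isOpen_lt continuous_const ((continuous_stoneCechExtend hf).dist continuous_const))
  obtain ⟨p, hpN, hp_lt, hp_dist⟩ :=
    exists_stoneCechUnit_mem_of_finite hπ hu hq hO ⟨hq_lt, hN⟩ (finite_Iic N)
  rw [mem_ofPred_eq, stoneCechExtend_stoneCechUnit] at hp_lt hp_dist
  have hN_le : (N : ℝ) + 1 ≤ π p := by exact_mod_cast notMem_Iic.1 hpN
  refine (mul_dist_lt_one_of_pinch_lt_one hp_lt).not_ge ?_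
  calc (1 : ℝ) = (N + 1) * (1 / (N + 1)) := by field_simp
    _ ≤ π p * dist (f p) y := by gcongr

theorem nonempty_interior_stoneCechExtend_fiber (hπ : Continuous π) (hf : Continuous f)
    (hu : ∀ n, u ≠ stoneCechUnit n) {σ : ℕ → E} (hσπ : ∀ n, π (σ n) = n) (hσf : ∀ n, f (σ n) = y) :
    (interior ((fun q : stoneCechExtend (continuous_stoneCechUnit.comp hπ) ⁻¹' {u} =>
      stoneCechExtend hf q.1) ⁻¹' {y})).Nonempty := by
  obtain ⟨q, hq, hq_zero⟩ := exists_stoneCechExtend_pinch_eq_zero hπ hf hσπ hσf u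
  refine ⟨⟨q, hq⟩, mem_interior.2
    ⟨{r | stoneCechExtend (continuous_pinch hπ hf y) r.1 < 1}, fun r hr => ?_, ?_, ?_⟩⟩
  · exact stoneCechExtend_eq_of_pinch_lt_one hπ hf hu r.2 hr
  · exact isOpen_lt ((continuous_stoneCechExtend _).comp continuous_subtype_val) continuous_const
  · simp [hq_zero]

end StoneCechFibers

theorem continuous_fu (u : StoneCech ℕ) : Continuous (fu u) :=
  (continuous_stoneCechExtend _).comp continuous_subtype_val

theorem nonempty_interior_fu_fiber {u : StoneCech ℕ} (hu : ∀ n : ℕ, u ≠ stoneCechUnit n)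
    (t : unitInterval) : (interior (fu u ⁻¹' {t})).Nonempty :=
  nonempty_interior_stoneCechExtend_fiber continuous_fst (continuous_fst.comp continuous_snd) hu
    (σ := fun n => (n, t, 0)) (fun _ => rfl) fun _ => rfl

theorem Xseq_eq_fiberDerivSeq (u : StoneCech ℕ) : Xseq u = fiberDerivSeq (fu u) := rfl

/-- The least ordinal `δ` with `X_δ = X_{δ+1}` satisfies `δ ≥ ω₁`. -/
theorem omega1_le_delta (u : StoneCech ℕ)
    (hu : ∀ n : ℕ, u ≠ stoneCechUnit n)
    (hne : (Su u).Nonempty) (hcomp : IsCompact (Su u)) (hconn : IsConnected (Su u))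
    (hFsp : IsFSpace (Su u))
    (hP : ∀ s r : unitInterval, s < r → IsConnected (Pset u s r))
    (δ : Ordinal) (hδ : Xseq u δ = Xseq u (δ + 1))
    (hmin : ∀ β < δ, Xseq u β ≠ Xseq u (β + 1)) :
    (Cardinal.aleph 1).ord ≤ δ := by
  have : CompactSpace (Su u) := isCompact_iff_compactSpace.1 hcomp
  exact omega1_le_delta_general hFsp (continuous_fu u) (nonempty_interior_fu_fiber hu)
    (by simpa only [Xseq_eq_fiberDerivSeq] using hδ)

end
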